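/- Fix ε ∈ {1, −1}. Define, in F = ℚ(u, t), for 0 ≤ i ≤ j with i ≡ j (mod 2): c_{ij} = ε^{(j−i)/2} u^{((j−i)/2)^2} t^{j−i} (∏_{k=i+1}^{j}(u^{k} − 1)) / (∏_{k=1}^{(j−i)/2}(1 − u^{i+j−1+2k} t^{2})(u^{2k} − 1)), and c_{ij} = 0 otherwise (in particular when i > j or i ≢ j mod 2). Then for every integer n ≥ 0, the (n+1)×(n+1) matrices B = (b_{ij})_{0 ≤ i,j ≤ n} and C = (c_{ij})_{0 ≤ i,j ≤ n} satisfy B·C = I_{n+1}; equivalently, ∑_{k=i}^{j} b_{ik} c_{kj} equals 1 if i = j and equals 0 if i < j. (This is the explicit inverse of the change-of-basis matrix between the Eisenstein series attached to the cusps w_ν and the U(p)-eigenfunctions, for the quadratic character, with ε = χ_p(−1).) -/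

import Mathlib

/-- `F = ℚ(u, t)`, the field of rational functions in two independent
indeterminates over `ℚ`; `u` stands for the odd prime `p` and `t` for `p^{−s}`. -/
noncomputable abbrev Fut : Type := FractionRing (MvPolynomial (Fin 2) ℚ)

/-- The indeterminate `u` viewed inside `Fut`. -/
noncomputable def U : Fut := algebraMap (MvPolynomial (Fin 2) ℚ) Fut (MvPolynomial.X 0)

/-- The indeterminate `t` viewed inside `Fut`. -/
noncomputable def T : Fut := algebraMap (MvPolynomial (Fin 2) ℚ) Fut (MvPolynomial.X 1)

/-!
Put `q = u²` and `a = u^(2i+3) t²`. Up to a factor independent of `m`, the product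
`b_{i,i+2m} c_{i+2m,i+2n+2}` equals
`(-1)^(n+1-m) q^((n+1-m) choose 2) / ((q;q)_m (q;q)_{n+1-m})` times `(a q^m;q)_n`.
The last factor is a polynomial of degree `n` in `q^m`, and summing such values against these
weights is a `q`-analogue of taking an `(n+1)`-st finite difference. It kills all polynomials of
degree at most `n`, because by the `q`-binomial theorem it sends `z ↦ z^d` to a multiple of
`∏_{k ≤ n} (q^d - q^k)`.
-/

open Finset Polynomial

section QPochhammer

variable {R : Type*} [CommRing R]

/-- The finite `q`-Pochhammer symbol `(a;q)_n = (1 - a)(1 - aq)⋯(1 - aq^(n-1))`. -/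
def qPochhammer (a q : R) (n : ℕ) : R := ∏ k ∈ range n, (1 - a * q ^ k)

@[simp]
theorem qPochhammer_zero (a q : R) : qPochhammer a q 0 = 1 := prod_range_zero _

theorem qPochhammer_add (a q : R) (m n : ℕ) :
    qPochhammer a q (m + n) = qPochhammer a q m * qPochhammer (a * q ^ m) q n := by
  simp only [qPochhammer, prod_range_add, pow_add, mul_assoc]

theorem qPochhammer_self_succ (q : R) (n : ℕ) :
    qPochhammer q q (n + 1) = qPochhammer q q n * (1 - q ^ (n + 1)) := by
  rw [qPochhammer, prod_range_succ, ← pow_succ', qPochhammer]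

theorem qPochhammer_ne_zero [IsDomain R] {a q : R} (h : ∀ k, a * q ^ k ≠ 1) (n : ℕ) :
    qPochhammer a q n ≠ 0 :=
  prod_ne_zero_iff.2 fun k _ ↦ sub_ne_zero.2 (h k).symm

theorem qPochhammer_div_qPochhammer_add {K : Type*} [Field K] {a q : K} {l n : ℕ}
    (h : qPochhammer (a * q ^ l) q n ≠ 0) (m : ℕ) :
    qPochhammer (a * q ^ l) q n / qPochhammer a q (l + n + m) =
      1 / (qPochhammer a q l * qPochhammer (a * q ^ (l + n)) q m) := by
  rw [qPochhammer_add, qPochhammer_add, mul_right_comm, mul_comm _ (qPochhammer (a * q ^ l) q n),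
    div_mul_cancel_left₀ h, one_div]

theorem qPochhammer_mul_eq_eval (a q x : R) (n : ℕ) :
    qPochhammer (a * x) q n = (∏ k ∈ range n, (1 - C (a * q ^ k) * X)).eval x := by
  simp only [qPochhammer, eval_prod, eval_sub, eval_one, eval_C_mul, eval_X, mul_right_comm]

theorem natDegree_prod_one_sub_C_mul_X_le (f : ℕ → R) (n : ℕ) :
    (∏ k ∈ range n, (1 - C (f k) * X)).natDegree ≤ n := by
  have factor_le (k : ℕ) : (1 - C (f k) * X).natDegree ≤ 1 :=
    natDegree_sub_le_of_le (natDegree_one.trans_le zero_le_one)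
      ((natDegree_C_mul_le _ _).trans natDegree_X_le)
  simpa using (natDegree_prod_le _ _).trans
    (sum_le_card_nsmul (range n) _ 1 fun k _ ↦ factor_le k)

end QPochhammer

section QDifference

variable {K : Type*} [Field K] {q : K}

theorem choose_two_succ (n : ℕ) : (n + 1).choose 2 = n + n.choose 2 := by
  rw [Nat.choose_succ_succ', Nat.choose_one_right]

/-- The coefficient of `f (q ^ l)` in the `q`-analogue of the `(l + m)`-th finite difference of
`f`, divided by `(q;q)_{l+m}`. -/
def qDiffCoeff (q : K) (l m : ℕ) : K :=
  (-1) ^ m * q ^ m.choose 2 / (qPochhammer q q l * qPochhammer q q m)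

theorem one_sub_pow_mul_qDiffCoeff_succ_left (hq : ∀ k ≠ 0, q ^ k ≠ 1) (l m : ℕ) :
    (1 - q ^ (l + 1)) * qDiffCoeff q (l + 1) m = qDiffCoeff q l m := by
  have hl : 1 - q ^ (l + 1) ≠ 0 := sub_ne_zero.2 (hq _ l.succ_ne_zero).symm
  rw [qDiffCoeff, qDiffCoeff, qPochhammer_self_succ, mul_right_comm, mul_comm _ (1 - q ^ (l + 1)),
    ← mul_div_assoc, mul_div_mul_left _ _ hl]

theorem one_sub_pow_mul_qDiffCoeff_succ_right (hq : ∀ k ≠ 0, q ^ k ≠ 1) (l m : ℕ) :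
    (1 - q ^ (m + 1)) * qDiffCoeff q l (m + 1) = -q ^ m * qDiffCoeff q l m := by
  have hm : 1 - q ^ (m + 1) ≠ 0 := sub_ne_zero.2 (hq _ m.succ_ne_zero).symm
  rw [qDiffCoeff, qDiffCoeff, qPochhammer_self_succ, ← mul_assoc, mul_comm _ (1 - q ^ (m + 1)),
    ← mul_div_assoc, mul_div_mul_left _ _ hm, choose_two_succ]
  ring

theorem one_sub_pow_mul_sum_antidiagonal_qDiffCoeff (hq : ∀ k ≠ 0, q ^ k ≠ 1) (z : K) (n : ℕ) :
    (1 - q ^ (n + 1)) * ∑ p ∈ antidiagonal (n + 1), qDiffCoeff q p.1 p.2 * z ^ p.1 =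
      (z - q ^ n) * ∑ p ∈ antidiagonal n, qDiffCoeff q p.1 p.2 * z ^ p.1 := by
  have raise_left : ∑ p ∈ antidiagonal (n + 1),
      (1 - q ^ p.1) * qDiffCoeff q p.1 p.2 * z ^ p.1 =
        z * ∑ p ∈ antidiagonal n, qDiffCoeff q p.1 p.2 * z ^ p.1 := by
    simp only [Nat.sum_antidiagonal_succ, one_sub_pow_mul_qDiffCoeff_succ_left hq, mul_sum]
    simp only [pow_zero, sub_self, zero_mul, zero_add, pow_succ', mul_left_comm]
  have raise_right : ∑ p ∈ antidiagonal (n + 1),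
      q ^ p.1 * ((1 - q ^ p.2) * qDiffCoeff q p.1 p.2) * z ^ p.1 =
        -q ^ n * ∑ p ∈ antidiagonal n, qDiffCoeff q p.1 p.2 * z ^ p.1 := by
    simp only [Nat.sum_antidiagonal_succ', one_sub_pow_mul_qDiffCoeff_succ_right hq, mul_sum]
    simp only [pow_zero, sub_self, zero_mul, mul_zero, zero_add]
    refine sum_congr rfl fun p hp ↦ ?_
    rw [← mem_antidiagonal.1 hp, pow_add]
    ring
  -- `1 - q ^ (l + m) = (1 - q ^ l) + q ^ l * (1 - q ^ m)`
  rw [sub_eq_add_neg z, add_mul z, ← raise_left, ← raise_right, ← sum_add_distrib, mul_sum]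
  refine sum_congr rfl fun p hp ↦ ?_
  rw [← mem_antidiagonal.1 hp, pow_add]
  ring

theorem sum_antidiagonal_qDiffCoeff_mul_pow (hq : ∀ k ≠ 0, q ^ k ≠ 1) (z : K) (n : ℕ) :
    ∑ p ∈ antidiagonal n, qDiffCoeff q p.1 p.2 * z ^ p.1 =
      (∏ k ∈ range n, (z - q ^ k)) / qPochhammer q q n := by
  induction n with
  | zero => simp [qDiffCoeff]
  | succ n ih =>
    have hn : 1 - q ^ (n + 1) ≠ 0 := sub_ne_zero.2 (hq _ n.succ_ne_zero).symm
    apply mul_left_cancel₀ hn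
    rw [one_sub_pow_mul_sum_antidiagonal_qDiffCoeff hq, ih, prod_range_succ, qPochhammer_self_succ]
    field_simp

theorem sum_antidiagonal_qDiffCoeff_mul_eval_eq_zero (hq : ∀ k ≠ 0, q ^ k ≠ 1) {f : K[X]} {n : ℕ}
    (hf : f.natDegree < n) :
    ∑ p ∈ antidiagonal n, qDiffCoeff q p.1 p.2 * f.eval (q ^ p.1) = 0 := by
  have monomial_eq_zero (d : ℕ) (hd : d ∈ range n) :
      ∑ p ∈ antidiagonal n, qDiffCoeff q p.1 p.2 * (q ^ d) ^ p.1 = 0 := by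
    rw [sum_antidiagonal_qDiffCoeff_mul_pow hq, prod_eq_zero hd (sub_self _), zero_div]
  calc ∑ p ∈ antidiagonal n, qDiffCoeff q p.1 p.2 * f.eval (q ^ p.1)
      = ∑ d ∈ range n, f.coeff d *
          ∑ p ∈ antidiagonal n, qDiffCoeff q p.1 p.2 * (q ^ d) ^ p.1 := by
        simp only [eval_eq_sum_range' hf, mul_sum]
        rw [sum_comm]
        simp only [mul_left_comm, pow_right_comm]
    _ = 0 := sum_eq_zero fun d hd ↦ by rw [monomial_eq_zero d hd, mul_zero]

theorem sum_antidiagonal_qDiffCoeff_mul_qPochhammer_eq_zero (hq : ∀ k ≠ 0, q ^ k ≠ 1) (a : K)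
    (n : ℕ) :
    ∑ p ∈ antidiagonal (n + 1), qDiffCoeff q p.1 p.2 * qPochhammer (a * q ^ p.1) q n = 0 := by
  simp only [qPochhammer_mul_eq_eval]
  exact sum_antidiagonal_qDiffCoeff_mul_eval_eq_zero hq
    (Nat.lt_succ_of_le (natDegree_prod_one_sub_C_mul_X_le _ n))

end QDifference

section Coefficients

variable {K : Type*} [Field K]

/-- The entry `b_{ij}` of the change-of-basis matrix, with `u` and `t` in an arbitrary field. -/
def bCoeff (ε u t : K) (i j : ℕ) : K :=
  if i ≤ j ∧ (j - i) % 2 = 0 then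
    (-ε) ^ ((j - i) / 2) * u ^ ((j - i) / 2) * t ^ (j - i) *
      (∏ k ∈ Icc (i + 1) j, (u ^ k - 1)) /
      ∏ k ∈ Icc 1 ((j - i) / 2), ((1 - u ^ (2 * i + 1 + 2 * k) * t ^ 2) * (u ^ (2 * k) - 1))
  else 0

/-- The entry `c_{ij}` of the inverse matrix, with `u` and `t` in an arbitrary field. The
subtraction in `i + j - 1` truncates only for `i = j = 0`, where the product is empty. -/
def cCoeff (ε u t : K) (i j : ℕ) : K :=
  if i ≤ j ∧ (j - i) % 2 = 0 then
    ε ^ ((j - i) / 2) * u ^ (((j - i) / 2) ^ 2) * t ^ (j - i) *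
      (∏ k ∈ Icc (i + 1) j, (u ^ k - 1)) /
      ∏ k ∈ Icc 1 ((j - i) / 2), ((1 - u ^ (i + j - 1 + 2 * k) * t ^ 2) * (u ^ (2 * k) - 1))
  else 0

theorem prod_Icc_one_eq_prod_range {M : Type*} [CommMonoid M] (f : ℕ → M) (n : ℕ) :
    ∏ k ∈ Icc 1 n, f k = ∏ k ∈ range n, f (k + 1) := by
  rw [range_eq_Ico, prod_Ico_add', zero_add, Ico_add_one_right_eq_Icc]

theorem prod_Icc_one_eq_qPochhammer_mul {R : Type*} [CommRing R] (u t : R) (e n : ℕ) :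
    ∏ k ∈ Icc 1 n, ((1 - u ^ (e + 2 * k) * t ^ 2) * (u ^ (2 * k) - 1)) =
      (-1) ^ n * (qPochhammer (u ^ (e + 2) * t ^ 2) (u ^ 2) n *
        qPochhammer (u ^ 2) (u ^ 2) n) := by
  have factor (k : ℕ) : (1 - u ^ (e + 2 * (k + 1)) * t ^ 2) * (u ^ (2 * (k + 1)) - 1) =
      -1 * ((1 - u ^ (e + 2) * t ^ 2 * (u ^ 2) ^ k) * (1 - u ^ 2 * (u ^ 2) ^ k)) := by
    ring
  rw [prod_Icc_one_eq_prod_range, prod_congr rfl fun k _ ↦ factor k]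
  simp only [prod_mul_distrib, prod_const, card_range, qPochhammer]

theorem sq_eq_add_two_mul_choose_two (n : ℕ) : n ^ 2 = n + 2 * n.choose 2 := by
  induction n with
  | zero => rfl
  | succ n ih => rw [choose_two_succ]; linarith

theorem bCoeff_add_two_mul (ε u t : K) (i m : ℕ) :
    bCoeff ε u t i (i + 2 * m) = (ε * u * t ^ 2) ^ m * (∏ k ∈ Ioc i (i + 2 * m), (u ^ k - 1)) /
      (qPochhammer (u ^ (2 * i + 3) * t ^ 2) (u ^ 2) m * qPochhammer (u ^ 2) (u ^ 2) m) := by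
  have sign_ne_zero : (-1 : K) ^ m ≠ 0 := pow_ne_zero m (neg_ne_zero.2 one_ne_zero)
  rw [bCoeff, if_pos (by omega), Nat.add_sub_cancel_left, Nat.mul_div_cancel_left m two_pos,
    prod_Icc_one_eq_qPochhammer_mul, Icc_add_one_left_eq_Ioc, neg_pow, pow_mul]
  simp only [mul_pow, mul_assoc, mul_div_mul_left _ _ sign_ne_zero]

theorem cCoeff_add_two_mul (ε u t : K) (i m : ℕ) :
    cCoeff ε u t i (i + 2 * m) =
      (ε * u * t ^ 2) ^ m * (∏ k ∈ Ioc i (i + 2 * m), (u ^ k - 1)) /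
        qPochhammer (u ^ (2 * i + 2 * m + 1) * t ^ 2) (u ^ 2) m *
        ((-1) ^ m * (u ^ 2) ^ m.choose 2 / qPochhammer (u ^ 2) (u ^ 2) m) := by
  have sign_inv : ((-1 : K) ^ m)⁻¹ = (-1) ^ m := by rw [← inv_pow, inv_neg_one]
  have denominator : ∏ k ∈ Icc 1 m,
      ((1 - u ^ (i + (i + 2 * m) - 1 + 2 * k) * t ^ 2) * (u ^ (2 * k) - 1)) =
        (-1) ^ m * (qPochhammer (u ^ (2 * i + 2 * m + 1) * t ^ 2) (u ^ 2) m *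
          qPochhammer (u ^ 2) (u ^ 2) m) := by
    rcases m.eq_zero_or_pos with rfl | hm
    · simp
    · rw [prod_Icc_one_eq_qPochhammer_mul]
      congr 5
      omega
  rw [cCoeff, if_pos (by omega), Nat.add_sub_cancel_left, Nat.mul_div_cancel_left m two_pos,
    denominator, Icc_add_one_left_eq_Ioc, sq_eq_add_two_mul_choose_two]
  simp only [div_eq_mul_inv, mul_inv, sign_inv]
  ring

theorem bCoeff_mul_cCoeff (ε : K) {u t : K} (ht : ∀ k, u ^ (2 * k + 3) * t ^ 2 ≠ 1)
    (i n : ℕ) {l m : ℕ} (h : l + m = n + 1) :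
    bCoeff ε u t i (i + 2 * l) * cCoeff ε u t (i + 2 * l) (i + 2 * (n + 1)) =
      (ε * u * t ^ 2) ^ (n + 1) * (∏ k ∈ Ioc i (i + 2 * (n + 1)), (u ^ k - 1)) /
        qPochhammer (u ^ (2 * i + 3) * t ^ 2) (u ^ 2) (2 * n + 1) *
        (qDiffCoeff (u ^ 2) l m *
          qPochhammer (u ^ (2 * i + 3) * t ^ 2 * (u ^ 2) ^ l) (u ^ 2) n) := by
  have hj : i + 2 * (n + 1) = i + 2 * l + 2 * m := by omega
  have numerator : ∏ k ∈ Ioc i (i + 2 * l + 2 * m), (u ^ k - 1) =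
      (∏ k ∈ Ioc i (i + 2 * l), (u ^ k - 1)) *
        ∏ k ∈ Ioc (i + 2 * l) (i + 2 * l + 2 * m), (u ^ k - 1) := by
    rw [prod_Ioc_consecutive _ (by omega) (by omega)]
  have base : u ^ (2 * (i + 2 * l) + 2 * m + 1) * t ^ 2 =
      u ^ (2 * i + 3) * t ^ 2 * (u ^ 2) ^ (l + n) := by
    rw [show 2 * (i + 2 * l) + 2 * m + 1 = 2 * i + 3 + 2 * (l + n) by omega]
    ring
  have middle_ne_zero :
      qPochhammer (u ^ (2 * i + 3) * t ^ 2 * (u ^ 2) ^ l) (u ^ 2) n ≠ 0 := by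
    refine qPochhammer_ne_zero (fun k ↦ ?_) n
    convert ht (i + l + k) using 1
    ring
  rw [hj, bCoeff_add_two_mul, cCoeff_add_two_mul, numerator, base, ← h,
    show 2 * n + 1 = l + n + m by omega, mul_comm_div _ (qPochhammer _ _ (l + n + m)),
    mul_div_assoc (qDiffCoeff _ _ _), qPochhammer_div_qPochhammer_add middle_ne_zero,
    qDiffCoeff]
  ring

theorem sum_bCoeff_mul_cCoeff_eq_sum_antidiagonal (ε u t : K) {i j n : ℕ} (h : i + 2 * j ≤ n) :
    ∑ k ∈ range (n + 1), bCoeff ε u t i k * cCoeff ε u t k (i + 2 * j) =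
      ∑ p ∈ antidiagonal j,
        bCoeff ε u t i (i + 2 * p.1) * cCoeff ε u t (i + 2 * p.1) (i + 2 * j) := by
  symm
  refine sum_of_injOn (fun p ↦ i + 2 * p.1) ?_ ?_ ?_ fun _ _ ↦ rfl
  · intro p hp p' hp' heq
    simp only [mem_coe, HasAntidiagonal.mem_antidiagonal] at hp hp' heq
    ext <;> omega
  · intro p hp
    simp only [mem_coe, HasAntidiagonal.mem_antidiagonal, mem_range] at hp ⊢
    omega
  · intro k _ hk
    have hk' : ¬((i ≤ k ∧ (k - i) % 2 = 0) ∧ (k ≤ i + 2 * j ∧ (i + 2 * j - k) % 2 = 0)) :=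
      fun h ↦ hk ⟨((k - i) / 2, j - (k - i) / 2), by
        simp only [mem_coe, HasAntidiagonal.mem_antidiagonal]; omega, by dsimp only; omega⟩
    rcases not_and_or.1 hk' with hb | hc
    · rw [bCoeff, if_neg hb, zero_mul]
    · rw [cCoeff, if_neg hc, mul_zero]

theorem sum_antidiagonal_bCoeff_mul_cCoeff (ε : K) {u t : K} (hu : ∀ k ≠ 0, u ^ k ≠ 1)
    (ht : ∀ k, u ^ (2 * k + 3) * t ^ 2 ≠ 1) (i n : ℕ) :
    ∑ p ∈ antidiagonal n, bCoeff ε u t i (i + 2 * p.1) * cCoeff ε u t (i + 2 * p.1) (i + 2 * n) =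
      if n = 0 then 1 else 0 := by
  obtain - | n := n
  · simp [bCoeff, cCoeff]
  have hq (k : ℕ) (hk : k ≠ 0) : (u ^ 2) ^ k ≠ 1 := by
    rw [← pow_mul]
    exact hu _ (mul_ne_zero two_ne_zero hk)
  rw [if_neg n.succ_ne_zero,
    sum_congr rfl fun p hp ↦ bCoeff_mul_cCoeff ε ht i n (mem_antidiagonal.1 hp), ← mul_sum,
    sum_antidiagonal_qDiffCoeff_mul_qPochhammer_eq_zero hq, mul_zero]

theorem bCoeff_mul_cCoeff_eq_zero (ε u t : K) {i j : ℕ} (hij : ¬(i ≤ j ∧ (j - i) % 2 = 0))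
    (k : ℕ) : bCoeff ε u t i k * cCoeff ε u t k j = 0 := by
  by_cases hik : i ≤ k ∧ (k - i) % 2 = 0
  · rw [cCoeff, if_neg (by omega), mul_zero]
  · rw [bCoeff, if_neg hik, zero_mul]

theorem c_chip_inverse_general (ε : K) {u t : K} (hu : ∀ k ≠ 0, u ^ k ≠ 1)
    (ht : ∀ k, u ^ (2 * k + 3) * t ^ 2 ≠ 1) (n : ℕ) :
    (Matrix.of fun i j : Fin (n + 1) => bCoeff ε u t i j) *
      (Matrix.of fun i j : Fin (n + 1) => cCoeff ε u t i j) = 1 := by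
  ext ⟨i, hi⟩ ⟨j, hj⟩
  simp only [Matrix.mul_apply, Matrix.of_apply, Matrix.one_apply, Fin.mk.injEq]
  rw [Fin.sum_univ_eq_sum_range fun k ↦ bCoeff ε u t i k * cCoeff ε u t k j]
  by_cases hij : i ≤ j ∧ (j - i) % 2 = 0
  · obtain ⟨m, rfl⟩ : ∃ m, j = i + 2 * m := ⟨(j - i) / 2, by omega⟩
    rw [sum_bCoeff_mul_cCoeff_eq_sum_antidiagonal ε u t (Nat.le_of_lt_succ hj),
      sum_antidiagonal_bCoeff_mul_cCoeff ε hu ht]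
    simp
  · rw [if_neg (by omega), sum_eq_zero fun k _ ↦ bCoeff_mul_cCoeff_eq_zero ε u t hij k]

end Coefficients

theorem algebraMap_ne_one_of_constantCoeff_eq_zero {σ R A : Type*} [CommSemiring R] [Nontrivial R]
    [Semiring A] [Algebra (MvPolynomial σ R) A] [FaithfulSMul (MvPolynomial σ R) A]
    {p : MvPolynomial σ R} (hp : MvPolynomial.constantCoeff p = 0) :
    algebraMap (MvPolynomial σ R) A p ≠ 1 := by
  rw [Ne, FaithfulSMul.algebraMap_eq_one_iff]
  rintro rfl
  exact one_ne_zero ((map_one _).symm.trans hp)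

theorem U_pow_ne_one {k : ℕ} (hk : k ≠ 0) : U ^ k ≠ 1 := by
  rw [U, ← map_pow]
  exact algebraMap_ne_one_of_constantCoeff_eq_zero (by simp [hk])

theorem U_pow_mul_T_sq_ne_one (k : ℕ) : U ^ k * T ^ 2 ≠ 1 := by
  rw [U, T, ← map_pow, ← map_pow, ← map_mul]
  exact algebraMap_ne_one_of_constantCoeff_eq_zero (by simp)

/-- The matrix `C = (c_{ij})` of the displayed closed formulas is the inverse of the
change-of-basis matrix `B = (b_{ij})` between the Eisenstein series attached to the
cusps `w_ν` and the `U(p)`-eigenfunctions, for the quadratic character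
(`ε = χ_p(−1)`). -/
theorem c_chip_inverse (ε : Fut) (hε : ε = 1 ∨ ε = -1) (b c : ℕ → ℕ → Fut)
    -- b_{ij} for 0 ≤ i ≤ j with j − i even
    (hb_even : ∀ i j : ℕ, i ≤ j → (j - i) % 2 = 0 →
      b i j = (-ε) ^ ((j - i) / 2) * U ^ ((j - i) / 2) * T ^ (j - i) *
        (∏ k ∈ Finset.Icc (i + 1) j, (U ^ k - 1)) /
        ∏ k ∈ Finset.Icc 1 ((j - i) / 2),
          ((1 - U ^ (2 * i + 1 + 2 * k) * T ^ 2) * (U ^ (2 * k) - 1)))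
    -- b_{ij} = 0 otherwise
    (hb_zero : ∀ i j : ℕ, ¬(i ≤ j ∧ (j - i) % 2 = 0) → b i j = 0)
    -- c_{ij} for 0 ≤ i ≤ j with i ≡ j (mod 2)
    (hc_even : ∀ i j : ℕ, i ≤ j → (j - i) % 2 = 0 →
      c i j = ε ^ ((j - i) / 2) * U ^ (((j - i) / 2) ^ 2) * T ^ (j - i) *
        (∏ k ∈ Finset.Icc (i + 1) j, (U ^ k - 1)) /
        ∏ k ∈ Finset.Icc 1 ((j - i) / 2),
          ((1 - U ^ (i + j - 1 + 2 * k) * T ^ 2) * (U ^ (2 * k) - 1)))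
    -- c_{ij} = 0 otherwise
    (hc_zero : ∀ i j : ℕ, ¬(i ≤ j ∧ (j - i) % 2 = 0) → c i j = 0) :
    ∀ n : ℕ,
      (Matrix.of fun i j : Fin (n + 1) => b i j) * (Matrix.of fun i j : Fin (n + 1) => c i j)
        = 1 := by
  obtain rfl : b = bCoeff ε U T := by
    ext i j; unfold bCoeff; split_ifs with h
    exacts [hb_even i j h.1 h.2, hb_zero i j h]
  obtain rfl : c = cCoeff ε U T := by
    ext i j; unfold cCoeff; split_ifs with h
    exacts [hc_even i j h.1 h.2, hc_zero i j h]
  exact c_chip_inverse_general ε (fun _ hk ↦ U_pow_ne_one hk) fun _ ↦ U_pow_mul_T_sq_ne_one _
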